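/- arXiv:2505.01672 — 12 statements merged into one kernel-verified Lean document; each statement's English description precedes it below -/
import Mathlib

section
/- Let (X,d) be a complete metric space and T : X → X a mapping such that (i) for every ε > 0 there exists δ > 0 such that for all x, y ∈ X, (1/2)(d(x,Tx) + d(y,Ty)) < ε + δ implies d(Tx,Ty) ≤ ε, and (ii) for all x, y ∈ X, x ≠ y implies d(Tx,Ty) < (1/2)(d(x,Tx) + d(y,Ty)). Then T has a unique fixed point. -/
/-!
Condition (i) forces `d(Tx, Ty) ≤ (d(x, Tx) + d(y, Ty)) / 2`. For a map with this property,
`d(u, Tu) → 0` along any sequence `u` makes `Tu` Cauchy, and the limit is the unique fixed point.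
Along an orbit the displacements `sₙ = d(Tⁿx, Tⁿ⁺¹x)` decrease to some `L`. If `L > 0`, then (i)
with `ε = L` gives `sₙ₊₁ ≤ L` for some `n`, and (ii) gives `sₙ₊₂ < sₙ₊₁ ≤ L`, which is impossible.
-/

open Filter Topology

theorem le_of_forall_exists_lt_add_imp_le {a b : ℝ} (ha : 0 ≤ a)
    (h : ∀ ε > 0, ∃ δ > 0, a < ε + δ → b ≤ ε) : b ≤ a := by
  refine le_of_forall_gt_imp_ge_of_dense fun ε hε => ?_
  obtain ⟨δ, hδ, hab⟩ := h ε (ha.trans_lt hε)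
  exact hab (by linarith)

theorem tendsto_zero_of_forall_exists_lt_add_imp_succ_le {s : ℕ → ℝ} (hs : ∀ n, 0 ≤ s n)
    (hcjm : ∀ ε > 0, ∃ δ > 0, ∀ n, s n < ε + δ → s (n + 1) ≤ ε)
    (hlt : ∀ n, 0 < s n → s (n + 1) < s n) : Tendsto s atTop (𝓝 0) := by
  have hanti : Antitone s := antitone_nat_of_succ_le fun n =>
    le_of_forall_exists_lt_add_imp_le (hs n) fun ε hε =>
      let ⟨δ, hδ, h⟩ := hcjm ε hε
      ⟨δ, hδ, h n⟩
  have hbdd : BddBelow (Set.range s) := ⟨0, Set.forall_mem_range.2 hs⟩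
  have hinf_le : ∀ n, ⨅ k, s k ≤ s n := ciInf_le hbdd
  suffices hinf : ⨅ k, s k = 0 from hinf ▸ tendsto_atTop_ciInf hanti hbdd
  by_contra hne
  have hpos : 0 < ⨅ k, s k := (le_ciInf hs).lt_of_ne' hne
  obtain ⟨δ, hδ, h⟩ := hcjm _ hpos
  obtain ⟨n, hn⟩ := exists_lt_of_ciInf_lt (lt_add_of_pos_right (⨅ k, s k) hδ)
  have hlt_inf : s (n + 2) < ⨅ k, s k :=
    (hlt (n + 1) (hpos.trans_le (hinf_le _))).trans_le (h n hn)
  exact hlt_inf.not_ge (hinf_le _)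

/-- The non-strict form of Kannan's contraction condition, with the borderline constant `1 / 2`:
images are no further apart than the average displacement of the two points. -/
def IsKannanNonexpansive {X : Type*} [PseudoMetricSpace X] (T : X → X) : Prop :=
  ∀ x y, dist (T x) (T y) ≤ (dist x (T x) + dist y (T y)) / 2

theorem isKannanNonexpansive_of_forall_exists_lt_add_imp_le {X : Type*} [PseudoMetricSpace X]
    {T : X → X} (h : ∀ ε > (0 : ℝ), ∃ δ > (0 : ℝ), ∀ x y : X,
      (dist x (T x) + dist y (T y)) / 2 < ε + δ → dist (T x) (T y) ≤ ε) :
    IsKannanNonexpansive T := fun x y =>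
  le_of_forall_exists_lt_add_imp_le (by positivity) fun ε hε =>
    let ⟨δ, hδ, hxy⟩ := h ε hε
    ⟨δ, hδ, hxy x y⟩

theorem tendsto_dist_iterate_zero {X : Type*} [PseudoMetricSpace X] {T : X → X}
    (hcjm : ∀ ε > 0, ∃ δ > 0, ∀ x, dist x (T x) < ε + δ → dist (T x) (T (T x)) ≤ ε)
    (hlt : ∀ x, 0 < dist x (T x) → dist (T x) (T (T x)) < dist x (T x)) (x : X) :
    Tendsto (fun n => dist (T^[n] x) (T (T^[n] x))) atTop (𝓝 0) := by
  refine tendsto_zero_of_forall_exists_lt_add_imp_succ_le (fun _ => dist_nonneg)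
    (fun ε hε => ?_) fun n => ?_
  · obtain ⟨δ, hδ, h⟩ := hcjm ε hε
    refine ⟨δ, hδ, fun n => ?_⟩
    simpa only [Function.iterate_succ_apply'] using h (T^[n] x)
  · simpa only [Function.iterate_succ_apply'] using hlt (T^[n] x)

namespace IsKannanNonexpansive

section PseudoMetricSpace

variable {X ι : Type*} [PseudoMetricSpace X] {T : X → X} {u : ι → X} {l : Filter ι}

theorem dist_map_map_self_le (hT : IsKannanNonexpansive T) (x : X) :
    dist (T x) (T (T x)) ≤ dist x (T x) := by
  linarith [hT x (T x)]

theorem cauchy_map [l.NeBot] (hT : IsKannanNonexpansive T)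
    (hu : Tendsto (fun i => dist (u i) (T (u i))) l (𝓝 0)) :
    Cauchy (map (fun i => T (u i)) l) := by
  rw [cauchy_map_iff', tendsto_uniformity_iff_dist_tendsto_zero]
  have havg : Tendsto (fun p : ι × ι =>
      (dist (u p.1) (T (u p.1)) + dist (u p.2) (T (u p.2))) / 2) (l ×ˢ l) (𝓝 0) := by
    simpa using ((hu.comp tendsto_fst).add (hu.comp tendsto_snd)).div_const 2
  exact squeeze_zero (fun _ => dist_nonneg) (fun p => hT (u p.1) (u p.2)) havg

theorem dist_map_eq_zero_of_tendsto [l.NeBot] {z : X} (hT : IsKannanNonexpansive T)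
    (hu : Tendsto (fun i => dist (u i) (T (u i))) l (𝓝 0))
    (hz : Tendsto (fun i => T (u i)) l (𝓝 z)) : dist z (T z) = 0 := by
  have hle : dist z (T z) ≤ (0 + dist z (T z)) / 2 :=
    le_of_tendsto_of_tendsto' (hz.dist tendsto_const_nhds)
      ((hu.add_const _).div_const 2) fun i => hT (u i) z
  exact le_antisymm (by linarith) dist_nonneg

end PseudoMetricSpace

variable {X ι : Type*} [MetricSpace X] {T : X → X} {u : ι → X} {l : Filter ι}

theorem eq_of_map_eq_self (hT : IsKannanNonexpansive T) {y z : X} (hy : T y = y)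
    (hz : T z = z) : y = z := by
  simpa [hy, hz] using hT y z

theorem existsUnique_map_eq_self_of_tendsto [CompleteSpace X] [l.NeBot]
    (hT : IsKannanNonexpansive T) (hu : Tendsto (fun i => dist (u i) (T (u i))) l (𝓝 0)) :
    ∃! z, T z = z := by
  obtain ⟨z, hz⟩ := CompleteSpace.complete (hT.cauchy_map hu)
  have hfix : T z = z := (dist_eq_zero.1 (hT.dist_map_eq_zero_of_tendsto hu hz)).symm
  exact ⟨z, hfix, fun y hy => hT.eq_of_map_eq_self hy hfix⟩

end IsKannanNonexpansive

theorem exists_dist_lt_add_imp_dist_map_map_self_le {X : Type*} [PseudoMetricSpace X]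
    {T : X → X} (h : ∀ ε > (0 : ℝ), ∃ δ > (0 : ℝ), ∀ x y : X,
      (dist x (T x) + dist y (T y)) / 2 < ε + δ → dist (T x) (T y) ≤ ε) :
    ∀ ε > 0, ∃ δ > 0, ∀ x, dist x (T x) < ε + δ → dist (T x) (T (T x)) ≤ ε := by
  have hT : IsKannanNonexpansive T := isKannanNonexpansive_of_forall_exists_lt_add_imp_le h
  intro ε hε
  obtain ⟨δ, hδ, hxy⟩ := h ε hε
  exact ⟨δ, hδ, fun x hx => hxy x (T x) (by linarith [hT.dist_map_map_self_le x])⟩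

theorem kannan_cjm_fixed_point_general {X : Type*} [MetricSpace X] [CompleteSpace X] [Nonempty X]
    {T : X → X} (hT : IsKannanNonexpansive T)
    (hcjm : ∀ ε > 0, ∃ δ > 0, ∀ x, dist x (T x) < ε + δ → dist (T x) (T (T x)) ≤ ε)
    (hlt : ∀ x, x ≠ T x → dist (T x) (T (T x)) < dist x (T x)) :
    ∃! z, T z = z :=
  hT.existsUnique_map_eq_self_of_tendsto <|
    tendsto_dist_iterate_zero hcjm (fun x hx => hlt x (dist_pos.1 hx)) (Classical.arbitrary X)

/-- Kannan-type CJM fixed point theorem (Theorem 2.1). -/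
theorem kannan_cjm_fixed_point {X : Type*} [MetricSpace X] [CompleteSpace X] [Nonempty X]
    (T : X → X)
    (h1 : ∀ ε > (0 : ℝ), ∃ δ > (0 : ℝ), ∀ x y : X,
      (dist x (T x) + dist y (T y)) / 2 < ε + δ → dist (T x) (T y) ≤ ε)
    (h2 : ∀ x y : X, x ≠ y → dist (T x) (T y) < (dist x (T x) + dist y (T y)) / 2) :
    ∃! z : X, T z = z :=
  kannan_cjm_fixed_point_general (isKannanNonexpansive_of_forall_exists_lt_add_imp_le h1)
    (exists_dist_lt_add_imp_dist_map_map_self_le h1) fun x hx => by linarith [h2 x (T x) hx]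
end

section
/- Let (X,d) be a complete metric space and T : X → X a mapping satisfying condition (CM). If for every x ∈ X and every ε > 0 there exists δ > 0 such that for all i, j ∈ ℕ ∪ {0}, (1/2)(d(T^i x, T^{i+1} x) + d(T^j x, T^{j+1} x)) < ε + δ implies d(T^{i+1} x, T^{j+1} x) ≤ ε, then T has a unique fixed point z ∈ X and the Picard sequence (T^n x) converges to z for every x ∈ X. -/
/-!
Write `d n = dist (T^[n] x) (T^[n + 1] x)`. Condition (CM) applied to consecutive iterates makes `d`
strictly decreasing as long as it is positive. If its limit `r` were positive, the `ε`-`δ` condition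
at `ε = r` would push some `d (n + 1)` down to at most `r`, and the next strict decrease would go
below the limit; hence `d` tends to `0`. From there only the non-strict Kannan inequality matters:
`dist (T^[i + 1] x) (T^[j + 1] x) ≤ K * (d i + d j)` makes the orbit Cauchy, and comparing the orbit
with its limit `z` gives `dist z (T z) ≤ K * dist z (T z)`, so that `z` is fixed when `K < 1`.
-/

open Filter Function Topology

/-- `T` is asymptotically regular at `x`: the distance between consecutive terms of the Picard
sequence of `x` tends to zero. -/
def AsymptoticallyRegularAt {X : Type*} [PseudoMetricSpace X] (T : X → X) (x : X) : Prop :=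
  Tendsto (fun n => dist (T^[n] x) (T^[n + 1] x)) atTop (𝓝 0)

/-- `T` satisfies the Kannan inequality with constant `K`. No bound on `K` is built in: Kannan's
theorem is the case `K < 1 / 2`, and asymptotically regular maps allow `K < 1`. -/
def IsKannanWith {X : Type*} [PseudoMetricSpace X] (K : ℝ) (T : X → X) : Prop :=
  ∀ x y, dist (T x) (T y) ≤ K * (dist x (T x) + dist y (T y))

/-- Condition (CM): the Kannan inequality with the critical constant `1 / 2`, strict at distinct
points. -/
def IsStrictKannan {X : Type*} [PseudoMetricSpace X] (T : X → X) : Prop :=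
  ∀ x y, x ≠ y → dist (T x) (T y) < (dist x (T x) + dist y (T y)) / 2

namespace IsKannanWith

section PseudoMetricSpace

variable {X : Type*} [PseudoMetricSpace X] {T : X → X} {K : ℝ}

theorem cauchySeq_iterate (hT : IsKannanWith K T) {x : X} (hx : AsymptoticallyRegularAt T x) :
    CauchySeq fun n => T^[n] x := by
  rw [← cauchySeq_shift 1, cauchySeq_iff_tendsto_dist_atTop_0, ← prod_atTop_atTop_eq]
  have bound_tendsto : Tendsto (fun p : ℕ × ℕ => K * (dist (T^[p.1] x) (T^[p.1 + 1] x) +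
      dist (T^[p.2] x) (T^[p.2 + 1] x))) (atTop ×ˢ atTop) (𝓝 0) := by
    simpa only [add_zero, mul_zero, comp_def] using
      ((hx.comp tendsto_fst).add (hx.comp tendsto_snd)).const_mul K
  refine squeeze_zero (fun _ => dist_nonneg) (fun p => ?_) bound_tendsto
  simpa only [iterate_succ_apply'] using hT (T^[p.1] x) (T^[p.2] x)

end PseudoMetricSpace

variable {X : Type*} [MetricSpace X] {T : X → X} {K : ℝ}

theorem eq_of_isFixedPt (hT : IsKannanWith K T) {z w : X} (hz : IsFixedPt T z)
    (hw : IsFixedPt T w) : z = w := by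
  have hzw := hT z w
  rw [hz.eq, hw.eq, dist_self, dist_self, add_zero, mul_zero] at hzw
  exact dist_le_zero.mp hzw

theorem isFixedPt_of_tendsto_iterate (hT : IsKannanWith K T) (hK : K < 1) {x z : X}
    (hx : AsymptoticallyRegularAt T x) (hz : Tendsto (fun n => T^[n] x) atTop (𝓝 z)) :
    IsFixedPt T z := by
  have dist_le : dist z (T z) ≤ K * (0 + dist z (T z)) := by
    refine le_of_tendsto_of_tendsto' ((hz.comp (tendsto_add_atTop_nat 1)).dist tendsto_const_nhds)
      ((hx.add_const (dist z (T z))).const_mul K) fun n => ?_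
    simpa only [comp_apply, iterate_succ_apply'] using hT (T^[n] x) z
  have dist_nonpos : dist z (T z) ≤ 0 := by
    nlinarith [dist_nonneg (x := z) (y := T z)]
  exact (dist_le_zero.mp dist_nonpos).symm

theorem exists_isFixedPt_tendsto_iterate [CompleteSpace X] (hT : IsKannanWith K T) (hK : K < 1)
    {x : X} (hx : AsymptoticallyRegularAt T x) :
    ∃ z, IsFixedPt T z ∧ Tendsto (fun n => T^[n] x) atTop (𝓝 z) := by
  obtain ⟨z, hz⟩ := cauchySeq_tendsto_of_complete (hT.cauchySeq_iterate hx)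
  exact ⟨z, hT.isFixedPt_of_tendsto_iterate hK hx hz, hz⟩

end IsKannanWith

section AsymptoticRegularity

variable {X : Type*} [PseudoMetricSpace X] {T : X → X}

theorem antitone_dist_iterate_succ (hT : ∀ x, dist (T x) (T (T x)) ≤ dist x (T x)) (x : X) :
    Antitone fun n => dist (T^[n] x) (T^[n + 1] x) :=
  antitone_nat_of_succ_le fun n => by
    simpa only [iterate_succ_apply'] using hT (T^[n] x)

theorem asymptoticallyRegularAt_of_dist_lt
    (hT : ∀ x, x ≠ T x → dist (T x) (T (T x)) < dist x (T x)) {x : X}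
    (hx : ∀ ε > (0 : ℝ), ∃ δ > (0 : ℝ), ∀ n, dist (T^[n] x) (T^[n + 1] x) < ε + δ →
      dist (T^[n + 1] x) (T^[n + 2] x) ≤ ε) :
    AsymptoticallyRegularAt T x := by
  have dist_map_le (y : X) : dist (T y) (T (T y)) ≤ dist y (T y) := by
    rcases eq_or_ne y (T y) with hy | hy
    · rw [← hy, ← hy]
    · exact (hT y hy).le
  set d : ℕ → ℝ := fun n => dist (T^[n] x) (T^[n + 1] x)
  have d_bddBelow : BddBelow (Set.range d) := ⟨0, Set.forall_mem_range.mpr fun _ => dist_nonneg⟩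
  have d_tendsto : Tendsto d atTop (𝓝 (⨅ n, d n)) :=
    tendsto_atTop_ciInf (antitone_dist_iterate_succ dist_map_le x) d_bddBelow
  suffices iInf_eq : ⨅ n, d n = 0 by rwa [iInf_eq] at d_tendsto
  by_contra iInf_ne
  have iInf_pos : 0 < ⨅ n, d n := (le_ciInf fun _ => dist_nonneg).lt_of_ne' iInf_ne
  obtain ⟨δ, δ_pos, hδ⟩ := hx _ iInf_pos
  obtain ⟨n, hn⟩ := (d_tendsto.eventually_lt_const (lt_add_of_pos_right _ δ_pos)).exists
  have d_succ_pos : 0 < d (n + 1) := iInf_pos.trans_le (ciInf_le d_bddBelow _)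
  have iterate_ne : T^[n + 1] x ≠ T (T^[n + 1] x) := fun heq =>
    d_succ_pos.ne' (by simp only [d, iterate_succ_apply' T (n + 1), ← heq, dist_self])
  have d_lt : d (n + 2) < d (n + 1) := by
    simpa only [d, iterate_succ_apply'] using hT (T^[n + 1] x) iterate_ne
  exact (d_lt.trans_le (hδ n hn)).not_ge (ciInf_le d_bddBelow _)

end AsymptoticRegularity

namespace IsStrictKannan

variable {X : Type*} [PseudoMetricSpace X] {T : X → X}

theorem isKannanWith (hT : IsStrictKannan T) : IsKannanWith (1 / 2) T := by
  intro x y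
  rcases eq_or_ne x y with rfl | hxy
  · rw [dist_self]
    positivity
  · linarith [hT x y hxy]

theorem dist_map_map_lt (hT : IsStrictKannan T) {x : X} (hx : x ≠ T x) :
    dist (T x) (T (T x)) < dist x (T x) := by
  linarith [hT x (T x) hx]

theorem asymptoticallyRegularAt (hT : IsStrictKannan T) {x : X}
    (hx : ∀ ε > (0 : ℝ), ∃ δ > (0 : ℝ), ∀ n,
      (dist (T^[n] x) (T^[n + 1] x) + dist (T^[n + 1] x) (T^[n + 2] x)) / 2 < ε + δ →
        dist (T^[n + 1] x) (T^[n + 2] x) ≤ ε) :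
    AsymptoticallyRegularAt T x := by
  refine asymptoticallyRegularAt_of_dist_lt (fun _ => hT.dist_map_map_lt) fun ε ε_pos => ?_
  obtain ⟨δ, δ_pos, hδ⟩ := hx ε ε_pos
  refine ⟨δ, δ_pos, fun n hn => hδ n ?_⟩
  have kannan_step := hT.isKannanWith (T^[n] x) (T^[n + 1] x)
  simp only [← iterate_succ_apply' T] at kannan_step
  linarith

end IsStrictKannan

theorem kannan_weakest_forward_general {X : Type*} [MetricSpace X] [CompleteSpace X] [Nonempty X]
    {T : X → X} {K : ℝ} (hK : K < 1) (hT : IsKannanWith K T)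
    (hreg : ∀ x, AsymptoticallyRegularAt T x) :
    ∃ z : X, T z = z ∧ (∀ w : X, T w = w → w = z) ∧
      ∀ x : X, Tendsto (fun n => T^[n] x) atTop (𝓝 z) := by
  choose lim lim_fixed tendsto_lim using
    fun x => hT.exists_isFixedPt_tendsto_iterate hK (hreg x)
  obtain ⟨x₀⟩ := ‹Nonempty X›
  refine ⟨lim x₀, lim_fixed x₀, fun w hw => hT.eq_of_isFixedPt hw (lim_fixed x₀), fun x => ?_⟩
  exact hT.eq_of_isFixedPt (lim_fixed x) (lim_fixed x₀) ▸ tendsto_lim x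

/-- Theorem 3.1, (i) ⇒ (ii): the weakest Kannan-type condition on Picard sequences
implies existence of a unique fixed point and convergence of all Picard sequences. -/
theorem kannan_weakest_forward {X : Type*} [MetricSpace X] [CompleteSpace X] [Nonempty X]
    (T : X → X)
    (hCM : ∀ x y : X, x ≠ y → dist (T x) (T y) < (dist x (T x) + dist y (T y)) / 2)
    (h : ∀ x : X, ∀ ε > (0 : ℝ), ∃ δ > (0 : ℝ), ∀ i j : ℕ,
      (dist (T^[i] x) (T^[i+1] x) + dist (T^[j] x) (T^[j+1] x)) / 2 < ε + δ →
        dist (T^[i+1] x) (T^[j+1] x) ≤ ε) :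
    ∃ z : X, T z = z ∧ (∀ w : X, T w = w → w = z) ∧
      ∀ x : X, Filter.Tendsto (fun n => T^[n] x) Filter.atTop (nhds z) := by
  have hT : IsStrictKannan T := hCM
  exact kannan_weakest_forward_general one_half_lt_one hT.isKannanWith fun x =>
    hT.asymptoticallyRegularAt fun ε ε_pos =>
      (h x ε ε_pos).imp fun _ => And.imp_right fun hδ n => hδ n (n + 1)
end

section
/- Let (X,d) be a complete metric space and T : X → X a mapping satisfying condition (CM). If T has a unique fixed point z ∈ X and the Picard sequence (T^n x) converges to z for every x ∈ X, then for every x ∈ X and every ε > 0 there exists δ > 0 such that for all i, j ∈ ℕ ∪ {0}, (1/2)(d(T^i x, T^{i+1} x) + d(T^j x, T^{j+1} x)) < ε + δ implies d(T^{i+1} x, T^{j+1} x) ≤ ε. -/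
/-!
Along a convergent orbit `T^[n] x → z` the contractive condition forces `dist z (T z) = 0`, so the
pairs `(T^[n] x, T^[n+1] x)` converge to `(z, T z)` and the graph of `T` over the orbit together
with `z` is compact, although `T` need not be continuous. Over a compact piece of the graph, the
pairs whose images are at distance at least `ε` form a compact set on which the mean displacement
is pointwise greater than `ε`, hence bounded below by some `ε + δ`.
-/

open Filter Set Topology

/-- The strict Kannan contractive condition (CM): the images of two distinct points are closer
together than the mean of the displacements `dist x (T x)` and `dist y (T y)`. -/
def KannanContractive {X : Type*} [PseudoMetricSpace X] (T : X → X) : Prop :=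
  ∀ x y : X, x ≠ y → dist (T x) (T y) < (dist x (T x) + dist y (T y)) / 2

namespace KannanContractive

variable {X : Type*} [PseudoMetricSpace X] {T : X → X}

theorem dist_map_lt_of_pos (hT : KannanContractive T) {x y : X} (hxy : 0 < dist (T x) (T y)) :
    dist (T x) (T y) < (dist x (T x) + dist y (T y)) / 2 := by
  refine hT x y ?_
  rintro rfl
  exact hxy.ne' (dist_self _)

theorem dist_map_le (hT : KannanContractive T) (x y : X) :
    dist (T x) (T y) ≤ (dist x (T x) + dist y (T y)) / 2 := by
  rcases (dist_nonneg (x := T x) (y := T y)).eq_or_lt' with hzero | hpos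
  · rw [hzero]
    positivity
  · exact (hT.dist_map_lt_of_pos hpos).le

theorem inseparable_map_of_tendsto (hT : KannanContractive T) {ι : Type*} {l : Filter ι} [l.NeBot]
    {u : ι → X} {z : X} (hu : Tendsto u l (𝓝 z)) (hTu : Tendsto (fun n => T (u n)) l (𝓝 z)) :
    Inseparable z (T z) := by
  have hlim : dist z (T z) ≤ (dist z z + dist z (T z)) / 2 :=
    le_of_tendsto_of_tendsto' (hTu.dist tendsto_const_nhds)
      (((hu.dist hTu).add_const _).div_const 2) fun n => hT.dist_map_le (u n) z
  rw [dist_self] at hlim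
  exact Metric.inseparable_iff.2 (le_antisymm (by linarith) dist_nonneg)

theorem isCompact_graphOn_insert_range (hT : KannanContractive T) {u : ℕ → X} {z : X}
    (hu : Tendsto u atTop (𝓝 z)) (hTu : Tendsto (fun n => T (u n)) atTop (𝓝 z)) :
    IsCompact ((insert z (range u)).graphOn T) := by
  have hTz : Tendsto (fun n => T (u n)) atTop (𝓝 (T z)) :=
    (hT.inseparable_map_of_tendsto hu hTu).nhds_eq ▸ hTu
  rw [graphOn_insert, graphOn, ← range_comp]
  exact (hu.prodMk_nhds hTz).isCompact_insert_range

theorem exists_pos_forall_dist_map_lt (hT : KannanContractive T) {s : Set X}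
    (hs : IsCompact (s.graphOn T)) {ε : ℝ} (hε : 0 < ε) :
    ∃ δ > 0, ∀ x ∈ s, ∀ y ∈ s,
      (dist x (T x) + dist y (T y)) / 2 < ε + δ → dist (T x) (T y) < ε := by
  let farPairs : Set ((X × X) × (X × X)) :=
    (s.graphOn T ×ˢ s.graphOn T) ∩ {p | ε ≤ dist p.1.2 p.2.2}
  let meanDisplacement (p : (X × X) × (X × X)) : ℝ := (dist p.1.1 p.1.2 + dist p.2.1 p.2.2) / 2
  have hcompact : IsCompact farPairs :=
    (hs.prod hs).inter_right (isClosed_le (by fun_prop) (by fun_prop))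
  have hlarge : ∀ p ∈ farPairs, ε < meanDisplacement p := by
    rintro ⟨_, _⟩ ⟨⟨⟨x, -, rfl⟩, ⟨y, -, rfl⟩⟩, hfar⟩
    exact hfar.trans_lt (hT.dist_map_lt_of_pos (hε.trans_le hfar))
  obtain ⟨b, hεb, hb⟩ := hcompact.exists_forall_le' (f := meanDisplacement) (by fun_prop) hlarge
  refine ⟨b - ε, sub_pos.2 hεb, fun x hx y hy hmean => ?_⟩
  rw [add_sub_cancel] at hmean
  by_contra! hfar
  exact (hb ((x, T x), (y, T y))
    ⟨⟨mem_image_of_mem _ hx, mem_image_of_mem _ hy⟩, hfar⟩).not_gt hmean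

end KannanContractive

theorem kannan_weakest_backward_general {X : Type*} [PseudoMetricSpace X] {T : X → X}
    (hT : KannanContractive T) {x z : X} (hx : Tendsto (fun n => T^[n] x) atTop (𝓝 z))
    {ε : ℝ} (hε : 0 < ε) :
    ∃ δ > 0, ∀ i j : ℕ,
      (dist (T^[i] x) (T^[i+1] x) + dist (T^[j] x) (T^[j+1] x)) / 2 < ε + δ →
        dist (T^[i+1] x) (T^[j+1] x) < ε := by
  have hTx : Tendsto (fun n => T (T^[n] x)) atTop (𝓝 z) := by
    simpa only [Function.iterate_succ_apply'] using (tendsto_add_atTop_iff_nat 1).2 hx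
  obtain ⟨δ, hδ, hdist⟩ :=
    hT.exists_pos_forall_dist_map_lt (hT.isCompact_graphOn_insert_range hx hTx) hε
  have horbit (n : ℕ) : T^[n] x ∈ insert z (range fun n => T^[n] x) := .inr (mem_range_self n)
  simp only [Function.iterate_succ_apply']
  exact ⟨δ, hδ, fun i j => hdist _ (horbit i) _ (horbit j)⟩

/-- Theorem 3.1, (ii) ⇒ (i): if a (CM) mapping has a unique fixed point to which all
Picard sequences converge, then the weakest Kannan-type ε-δ condition holds. -/
theorem kannan_weakest_backward {X : Type*} [MetricSpace X] [CompleteSpace X] [Nonempty X]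
    (T : X → X)
    (hCM : ∀ x y : X, x ≠ y → dist (T x) (T y) < (dist x (T x) + dist y (T y)) / 2)
    (z : X) (hz : T z = z) (huniq : ∀ w : X, T w = w → w = z)
    (hconv : ∀ x : X, Filter.Tendsto (fun n => T^[n] x) Filter.atTop (nhds z)) :
    ∀ x : X, ∀ ε > (0 : ℝ), ∃ δ > (0 : ℝ), ∀ i j : ℕ,
      (dist (T^[i] x) (T^[i+1] x) + dist (T^[j] x) (T^[j+1] x)) / 2 < ε + δ →
        dist (T^[i+1] x) (T^[j+1] x) ≤ ε := by
  intro x ε hε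
  obtain ⟨δ, hδ, hdist⟩ := kannan_weakest_backward_general hCM (hconv x) hε
  exact ⟨δ, hδ, fun i j hij => (hdist i j hij).le⟩
end

section
/- Let (X,d) be a metric space and T : X → X a mapping satisfying d(Tx,Ty) ≤ (1/2)(d(x,Tx) + d(y,Ty)) for all x, y ∈ X. Fix x₀ ∈ X and set x_n = T^n x₀. If lim_{n→∞} d(x_n, x_{n+1}) = 0, then (x_n)_{n∈ℕ} is a Cauchy sequence. -/
section

open Filter Topology

variable {X : Type*} [PseudoMetricSpace X]

theorem cauchySeq_of_dist_le_add {ι : Type*} [Nonempty ι] [SemilatticeSup ι]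
    {u : ι → X} {b : ι → ℝ} (hu : ∀ m n, dist (u m) (u n) ≤ b m + b n)
    (hb : Tendsto b atTop (𝓝 0)) : CauchySeq u := by
  have hsum : Tendsto (fun p : ι × ι => b p.1 + b p.2) atTop (𝓝 0) := by
    rw [← prod_atTop_atTop_eq]
    simpa only [add_zero, Function.comp_apply] using (hb.comp tendsto_fst).add (hb.comp tendsto_snd)
  exact cauchySeq_iff_tendsto_dist_atTop_0.2 <|
    squeeze_zero (fun _ => dist_nonneg) (fun p => hu p.1 p.2) hsum

theorem kannan_cauchy_general {u : ℕ → X} {K : ℝ}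
    (hu : ∀ m n, dist (u (m + 1)) (u (n + 1)) ≤
      K * (dist (u m) (u (m + 1)) + dist (u n) (u (n + 1))))
    (hlim : Tendsto (fun n => dist (u n) (u (n + 1))) atTop (𝓝 0)) : CauchySeq u := by
  have hb : Tendsto (fun n => K * dist (u n) (u (n + 1))) atTop (𝓝 0) := by
    simpa only [mul_zero] using hlim.const_mul K
  have hshift : CauchySeq fun n => u (n + 1) :=
    cauchySeq_of_dist_le_add (fun m n => (hu m n).trans_eq (mul_add K _ _)) hb
  exact (cauchySeq_shift 1).1 hshift

end

/-- If T satisfies the nonstrict Kannan-type inequality and the successive distances of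
a Picard sequence tend to 0, then the Picard sequence is Cauchy. -/
theorem kannan_cauchy {X : Type*} [MetricSpace X]
    (T : X → X)
    (h : ∀ x y : X, dist (T x) (T y) ≤ (dist x (T x) + dist y (T y)) / 2)
    (x₀ : X)
    (hlim : Filter.Tendsto (fun n : ℕ => dist (T^[n] x₀) (T^[n+1] x₀))
      Filter.atTop (nhds 0)) :
    CauchySeq (fun n : ℕ => T^[n] x₀) := by
  refine kannan_cauchy_general (K := 2⁻¹) (fun m n => ?_) hlim
  simpa only [Function.iterate_succ_apply', div_eq_inv_mul] using h (T^[m] x₀) (T^[n] x₀)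
end

section
/- Let (X,d) be a complete metric space, T : X → X a mapping satisfying d(Tx,Ty) < (1/2)(d(x,Tx) + d(y,Ty)) whenever x ≠ y, and suppose u ∈ X is the limit of a Picard sequence x_n = T^n x₀ with lim_{n→∞} d(x_n, Tx_n) = 0. Then Tu = u. -/
open Filter Topology

section PseudoMetricSpace

variable {X : Type*} [PseudoMetricSpace X] {T : X → X} {u : X} {a b : ℝ}

theorem dist_map_le_of_forall_ne (ha : 0 ≤ a) (hb : 0 ≤ b)
    (h : ∀ x, x ≠ u → dist (T x) (T u) ≤ a * dist x (T x) + b * dist u (T u)) (x : X) :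
    dist (T x) (T u) ≤ a * dist x (T x) + b * dist u (T u) := by
  rcases eq_or_ne x u with rfl | hxu
  · rw [dist_self]
    positivity
  · exact h x hxu

theorem dist_self_map_le_mul_of_tendsto {ι : Type*} {l : Filter ι} [l.NeBot] {x : ι → X}
    (h : ∀ i, dist (T (x i)) (T u) ≤ a * dist (x i) (T (x i)) + b * dist u (T u))
    (hconv : Tendsto x l (𝓝 u)) (hdisp : Tendsto (fun i => dist (x i) (T (x i))) l (𝓝 0)) :
    dist u (T u) ≤ b * dist u (T u) := by
  have himage : Tendsto (fun i => T (x i)) l (𝓝 u) := hconv.congr_dist hdisp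
  have hleft : Tendsto (fun i => dist (T (x i)) (T u)) l (𝓝 (dist u (T u))) :=
    himage.dist tendsto_const_nhds
  have hright : Tendsto (fun i => a * dist (x i) (T (x i)) + b * dist u (T u)) l
      (𝓝 (b * dist u (T u))) := by
    simpa using (hdisp.const_mul a).add_const (b * dist u (T u))
  exact le_of_tendsto_of_tendsto' hleft hright h

end PseudoMetricSpace

theorem kannan_limit_is_fixed_general {X ι : Type*} [MetricSpace X] {T : X → X} {u : X}
    {a b : ℝ} (ha : 0 ≤ a) (hb : 0 ≤ b) (hb_lt : b < 1)
    (h : ∀ x, x ≠ u → dist (T x) (T u) ≤ a * dist x (T x) + b * dist u (T u))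
    {l : Filter ι} [l.NeBot] {x : ι → X} (hconv : Tendsto x l (𝓝 u))
    (hdisp : Tendsto (fun i => dist (x i) (T (x i))) l (𝓝 0)) :
    T u = u := by
  have hle : dist u (T u) ≤ b * dist u (T u) :=
    dist_self_map_le_mul_of_tendsto (fun i => dist_map_le_of_forall_ne ha hb h (x i)) hconv hdisp
  have hnonpos : dist u (T u) ≤ 0 := by
    nlinarith only [hle, hb_lt]
  exact (dist_le_zero.mp hnonpos).symm

/-- Under the strict Kannan-type inequality, the limit of a Picard sequence whose
displacement tends to 0 is a fixed point. -/
theorem kannan_limit_is_fixed {X : Type*} [MetricSpace X] [CompleteSpace X]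
    (T : X → X)
    (h : ∀ x y : X, x ≠ y → dist (T x) (T y) < (dist x (T x) + dist y (T y)) / 2)
    (x₀ : X) (u : X)
    (hconv : Filter.Tendsto (fun n : ℕ => T^[n] x₀) Filter.atTop (nhds u))
    (hdisp : Filter.Tendsto (fun n : ℕ => dist (T^[n] x₀) (T (T^[n] x₀)))
      Filter.atTop (nhds 0)) :
    T u = u :=
  kannan_limit_is_fixed_general (a := 1 / 2) (b := 1 / 2) (by norm_num) (by norm_num)
    (by norm_num) (fun x hxu => by linarith only [h x u hxu]) hconv hdisp
end

section
/- Let (X,d) be a complete metric space and T : X → X a mapping such that (i) for every ε > 0 there exists δ > 0 such that for all x, y ∈ X, (1/2)(d(x,Ty) + d(y,Tx)) < ε + δ implies d(Tx,Ty) ≤ ε, and (ii) for all x, y ∈ X, x ≠ y implies d(Tx,Ty) < (1/2)(d(x,Ty) + d(y,Tx)). Then T has a unique fixed point. -/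
/-!
Write `m x y = (d(x, Ty) + d(y, Tx)) / 2`. The triangle inequality through `Tx` gives
`m x y ≤ d(Tx, y) + (d(x, Tx) + d(y, Ty)) / 2`, and the first hypothesis forces
`d(Tx, Ty) ≤ m x y`. Hence the steps `d(Tⁿx, Tⁿ⁺¹x)` decrease to some `L`. If `L > 0`, the first
hypothesis at `ε = L` makes a step at most `L`, and the second makes the next one smaller than `L`,
which is absurd; so `L = 0`. Once a step `d(x, Tx)` is below the `δ` attached to `ε`, the bound on
`m` shows by induction that the orbit of `Tx` never leaves the closed `ε`-ball about `Tx`, so the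
orbit is Cauchy. At its limit `z` the inequality `d(Tx, Ty) ≤ m x y` becomes
`d(z, Tz) ≤ d(z, Tz) / 2`.
-/

open Filter Function Topology

section PseudoMetricSpace

variable {X : Type*} [PseudoMetricSpace X] {T : X → X} {x y : X}

/-- The Chatterjea mean of two points: the average of the two crossed distances, which replaces
`dist x y` in contraction conditions of Chatterjea type. -/
noncomputable def chatterjeaMean (T : X → X) (x y : X) : ℝ :=
  (dist x (T y) + dist y (T x)) / 2

/-- Maps that do not increase distances relative to the Chatterjea mean. -/
def ChatterjeaNonexpansive (T : X → X) : Prop :=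
  ∀ x y, dist (T x) (T y) ≤ chatterjeaMean T x y

/-- Maps that strictly decrease distances of distinct points relative to the Chatterjea mean;
condition (ii) of the theorem. -/
def ChatterjeaContractive (T : X → X) : Prop :=
  ∀ x y, x ≠ y → dist (T x) (T y) < chatterjeaMean T x y

/-- The `ε`-`δ` condition of Ćirić, Jachymski and Matkowski relative to the Chatterjea mean;
condition (i) of the theorem. The strict inequality that is often made part of a CJM contraction is
kept apart, as `ChatterjeaContractive`. -/
def ChatterjeaCJM (T : X → X) : Prop :=
  ∀ ε > 0, ∃ δ > 0, ∀ x y, chatterjeaMean T x y < ε + δ → dist (T x) (T y) ≤ ε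

theorem chatterjeaMean_nonneg (T : X → X) (x y : X) : 0 ≤ chatterjeaMean T x y := by
  unfold chatterjeaMean
  positivity

theorem chatterjeaMean_le_dist_add (T : X → X) (x y : X) :
    chatterjeaMean T x y ≤ dist (T x) y + (dist x (T x) + dist y (T y)) / 2 := by
  have hpath : dist x (T y) ≤ dist x (T x) + dist (T x) y + dist y (T y) :=
    dist_triangle4 x (T x) y (T y)
  rw [chatterjeaMean, dist_comm y (T x)]
  linarith

theorem chatterjeaMean_self_apply_le (T : X → X) (x : X) :
    chatterjeaMean T x (T x) ≤ (dist x (T x) + dist (T x) (T (T x))) / 2 := by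
  simpa using chatterjeaMean_le_dist_add T x (T x)

theorem ChatterjeaNonexpansive.dist_apply_le (hT : ChatterjeaNonexpansive T) (x : X) :
    dist (T x) (T (T x)) ≤ dist x (T x) := by
  linarith [hT x (T x), chatterjeaMean_self_apply_le T x]

theorem ChatterjeaNonexpansive.antitone_dist_iterate (hT : ChatterjeaNonexpansive T) (x : X) :
    Antitone fun n ↦ dist (T^[n] x) (T (T^[n] x)) :=
  antitone_nat_of_succ_le fun n ↦ by
    simpa only [iterate_succ_apply'] using hT.dist_apply_le (T^[n] x)

theorem ChatterjeaContractive.dist_apply_lt (hT : ChatterjeaContractive T) (hx : x ≠ T x) :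
    dist (T x) (T (T x)) < dist x (T x) := by
  linarith [hT x (T x) hx, chatterjeaMean_self_apply_le T x]

theorem ChatterjeaContractive.eq_of_isFixedPt (hT : ChatterjeaContractive T)
    (hx : IsFixedPt T x) (hy : IsFixedPt T y) : x = y := by
  by_contra hne
  have hlt : dist x y < (dist x y + dist y x) / 2 := by
    simpa only [chatterjeaMean, hx.eq, hy.eq] using hT x y hne
  linarith [dist_comm x y]

theorem ChatterjeaCJM.nonexpansive (hT : ChatterjeaCJM T) : ChatterjeaNonexpansive T := by
  refine fun x y ↦ le_of_forall_gt_imp_ge_of_dense fun ε hε ↦ ?_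
  obtain ⟨δ, hδ, hcontr⟩ := hT ε ((chatterjeaMean_nonneg T x y).trans_lt hε)
  exact hcontr x y (by linarith)

theorem ChatterjeaCJM.tendsto_dist_iterate_zero (hT : ChatterjeaCJM T)
    (hT' : ChatterjeaContractive T) (x : X) :
    Tendsto (fun n ↦ dist (T^[n] x) (T (T^[n] x))) atTop (𝓝 0) := by
  set step : ℕ → ℝ := fun n ↦ dist (T^[n] x) (T (T^[n] x))
  have hbdd : BddBelow (Set.range step) := ⟨0, Set.forall_mem_range.2 fun _ ↦ dist_nonneg⟩
  have hlim : Tendsto step atTop (𝓝 (⨅ n, step n)) :=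
    tendsto_atTop_ciInf (hT.nonexpansive.antitone_dist_iterate x) hbdd
  set L := ⨅ n, step n
  have hL_le (n : ℕ) : L ≤ step n := ciInf_le hbdd n
  suffices hL : L = 0 by rwa [hL] at hlim
  refine (Real.iInf_nonneg fun _ ↦ dist_nonneg).eq_of_not_lt' fun hLpos ↦ ?_
  obtain ⟨δ, hδ, hcontr⟩ := hT L hLpos
  obtain ⟨n, hn⟩ := (hlim.eventually_lt_const (lt_add_of_pos_right L hδ)).exists
  set p := T^[n] x
  have hstep_le : dist (T p) (T (T p)) ≤ L := by
    apply hcontr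
    linarith [chatterjeaMean_self_apply_le T p, hT.nonexpansive.dist_apply_le p]
  have hL_le_one : L ≤ dist (T p) (T (T p)) := by
    simpa only [step, iterate_succ_apply'] using hL_le (n + 1)
  have hL_le_two : L ≤ dist (T (T p)) (T (T (T p))) := by
    simpa only [step, iterate_succ_apply'] using hL_le (n + 2)
  have hne : T p ≠ T (T p) := fun h ↦
    (hLpos.trans_le hL_le_one).ne' (by rw [← h, dist_self])
  linarith [hT'.dist_apply_lt hne]

theorem ChatterjeaNonexpansive.dist_iterate_apply_le (hT : ChatterjeaNonexpansive T) {ε δ : ℝ}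
    (hε : 0 ≤ ε) (hcontr : ∀ y, chatterjeaMean T x y < ε + δ → dist (T x) (T y) ≤ ε)
    (hx : dist x (T x) < δ) (k : ℕ) : dist (T x) (T^[k] (T x)) ≤ ε := by
  induction k with
  | zero => simpa using hε
  | succ k ih =>
    set y := T^[k] (T x)
    have hy : dist y (T y) ≤ dist x (T x) := by
      simpa only [iterate_succ_apply, iterate_zero_apply] using
        hT.antitone_dist_iterate x (Nat.zero_le (k + 1))
    rw [iterate_succ_apply']
    apply hcontr
    linarith [chatterjeaMean_le_dist_add T x y]

theorem ChatterjeaCJM.cauchySeq_iterate (hT : ChatterjeaCJM T)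
    (hx : Tendsto (fun n ↦ dist (T^[n] x) (T (T^[n] x))) atTop (𝓝 0)) :
    CauchySeq fun n ↦ T^[n] x := by
  refine Metric.cauchySeq_iff'.2 fun ε hε ↦ ?_
  obtain ⟨δ, hδ, hcontr⟩ := hT (ε / 2) (half_pos hε)
  obtain ⟨N, hN⟩ := (hx.eventually_lt_const hδ).exists
  refine ⟨N + 1, fun n hn ↦ ?_⟩
  obtain ⟨k, rfl⟩ := Nat.exists_eq_add_of_le' hn
  rw [dist_comm, iterate_add_apply T k, iterate_succ_apply' T N]
  exact (hT.nonexpansive.dist_iterate_apply_le (half_pos hε).le (hcontr _) hN k).trans_lt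
    (half_lt_self hε)

end PseudoMetricSpace

theorem ChatterjeaNonexpansive.isFixedPt_of_tendsto {X ι : Type*} [MetricSpace X] {T : X → X}
    (hT : ChatterjeaNonexpansive T) {l : Filter ι} [l.NeBot] {u : ι → X} {z : X}
    (hu : Tendsto u l (𝓝 z)) (hTu : Tendsto (fun i ↦ T (u i)) l (𝓝 z)) : IsFixedPt T z := by
  have hmean : Tendsto (fun i ↦ chatterjeaMean T (u i) z) l (𝓝 ((dist z (T z) + dist z z) / 2)) :=
    ((hu.dist tendsto_const_nhds).add (tendsto_const_nhds.dist hTu)).div_const 2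
  have hhalf : dist z (T z) ≤ (dist z (T z) + dist z z) / 2 :=
    le_of_tendsto_of_tendsto' (hTu.dist tendsto_const_nhds) hmean fun i ↦ hT (u i) z
  rw [dist_self] at hhalf
  exact (dist_le_zero.1 (by linarith)).symm

/-- Chatterjea-type CJM fixed point theorem (Theorem 4.1). -/
theorem chatterjea_cjm_fixed_point {X : Type*} [MetricSpace X] [CompleteSpace X] [Nonempty X]
    (T : X → X)
    (h1 : ∀ ε > (0 : ℝ), ∃ δ > (0 : ℝ), ∀ x y : X,
      (dist x (T y) + dist y (T x)) / 2 < ε + δ → dist (T x) (T y) ≤ ε)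
    (h2 : ∀ x y : X, x ≠ y → dist (T x) (T y) < (dist x (T y) + dist y (T x)) / 2) :
    ∃! z : X, T z = z := by
  have hcjm : ChatterjeaCJM T := h1
  have hcontr : ChatterjeaContractive T := h2
  obtain ⟨x⟩ := ‹Nonempty X›
  have hcauchy : CauchySeq fun n ↦ T^[n] x :=
    hcjm.cauchySeq_iterate (hcjm.tendsto_dist_iterate_zero hcontr x)
  obtain ⟨z, hz⟩ := cauchySeq_tendsto_of_complete hcauchy
  have hTz : Tendsto (fun n ↦ T (T^[n] x)) atTop (𝓝 z) := by
    simpa only [comp_def, iterate_succ_apply'] using hz.comp (tendsto_add_atTop_nat 1)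
  have hfix : IsFixedPt T z := hcjm.nonexpansive.isFixedPt_of_tendsto hz hTz
  exact ⟨z, hfix, fun y hy ↦ hcontr.eq_of_isFixedPt hy hfix⟩
end

section
/- Let (X,d) be a complete metric space and T : X → X a mapping satisfying condition (CM2). If for every x ∈ X and every ε > 0 there exists δ > 0 such that for all i, j ∈ ℕ ∪ {0}, (1/2)(d(T^i x, T^{j+1} x) + d(T^j x, T^{i+1} x)) < ε + δ implies d(T^{i+1} x, T^{j+1} x) ≤ ε, then T has a unique fixed point z ∈ X and the Picard sequence (T^n x) converges to z for every x ∈ X. -/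
/-!
Along an orbit `u n = T^[n] x` the step lengths `dist (u n) (u (n + 1))` decrease, strictly while
they are positive. The `ε`-`δ` condition makes them attain their limit if that limit is positive,
which the strict decrease then forbids, so they tend to `0`. Once all steps are shorter than `δ`,
the same condition propagates the bound `ε` from `dist (u (m + 1)) (u (m + k + 1))` to
`dist (u (m + 1)) (u (m + k + 2))`, so the orbit is Cauchy. Its limit `z` satisfies
`dist z (T z) ≤ dist z (T z) / 2`, by passing to the limit in the contraction inequality.
-/

open Filter Function Topology

section PseudoMetricSpace

variable {X : Type*} [PseudoMetricSpace X]

/-- The strict Chatterjea contraction condition, (CM2) in the paper. -/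
def StrictChatterjea (T : X → X) : Prop :=
  ∀ x y : X, x ≠ y → dist (T x) (T y) < (dist x (T y) + dist y (T x)) / 2

/-- The Chatterjea condition of Meir–Keeler (`ε`-`δ`) type on a sequence, to be applied to Picard
sequences. It is stated for `u` alone, with `u (n + 1)` in the place of `T (u n)`. -/
def MeirKeelerChatterjeaSeq (u : ℕ → X) : Prop :=
  ∀ ε > (0 : ℝ), ∃ δ > (0 : ℝ), ∀ i j : ℕ,
    (dist (u i) (u (j + 1)) + dist (u j) (u (i + 1))) / 2 < ε + δ →
      dist (u (i + 1)) (u (j + 1)) ≤ ε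

namespace MeirKeelerChatterjeaSeq

variable {u : ℕ → X}

theorem dist_succ_succ_le (hu : MeirKeelerChatterjeaSeq u) (i j : ℕ) :
    dist (u (i + 1)) (u (j + 1)) ≤ (dist (u i) (u (j + 1)) + dist (u j) (u (i + 1))) / 2 := by
  refine le_of_forall_gt_imp_ge_of_dense fun ε hε => ?_
  have hε_pos : 0 < ε := lt_of_le_of_lt (by positivity) hε
  obtain ⟨δ, hδ, hεδ⟩ := hu ε hε_pos
  exact hεδ i j (by linarith)

theorem antitone_dist_succ (hu : MeirKeelerChatterjeaSeq u) :
    Antitone fun n => dist (u n) (u (n + 1)) := by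
  refine antitone_nat_of_succ_le fun n => ?_
  have hle := hu.dist_succ_succ_le n (n + 1)
  rw [dist_self] at hle
  linarith [dist_triangle (u n) (u (n + 1)) (u (n + 1 + 1))]

theorem exists_dist_succ_le_of_tendsto (hu : MeirKeelerChatterjeaSeq u) {r : ℝ} (hr : 0 < r)
    (hlim : Tendsto (fun n => dist (u n) (u (n + 1))) atTop (𝓝 r)) :
    ∃ n, dist (u n) (u (n + 1)) ≤ r := by
  obtain ⟨δ, hδ, hεδ⟩ := hu r hr
  obtain ⟨n, hn⟩ := (hlim.eventually_lt_const (lt_add_of_pos_right r hδ)).exists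
  refine ⟨n + 1, hεδ n (n + 1) ?_⟩
  have hstep : dist (u (n + 1)) (u (n + 1 + 1)) ≤ dist (u n) (u (n + 1)) :=
    hu.antitone_dist_succ n.le_succ
  rw [dist_self]
  linarith [dist_triangle (u n) (u (n + 1)) (u (n + 1 + 1))]

theorem tendsto_dist_succ_zero (hu : MeirKeelerChatterjeaSeq u)
    (hlt : ∀ n, 0 < dist (u n) (u (n + 1)) →
      dist (u (n + 1)) (u (n + 2)) < dist (u n) (u (n + 1))) :
    Tendsto (fun n => dist (u n) (u (n + 1))) atTop (𝓝 0) := by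
  have hbdd : BddBelow (Set.range fun n => dist (u n) (u (n + 1))) :=
    ⟨0, Set.forall_mem_range.2 fun _ => dist_nonneg⟩
  have hlim := tendsto_atTop_ciInf hu.antitone_dist_succ hbdd
  have hle_step := ciInf_le hbdd
  rcases (Real.iInf_nonneg fun n => dist_nonneg (x := u n) (y := u (n + 1))).eq_or_lt
    with hzero | hpos
  · rwa [← hzero] at hlim
  · obtain ⟨n, hn⟩ := hu.exists_dist_succ_le_of_tendsto hpos hlim
    have hdrop := hlt n (hpos.trans_le (hle_step n))
    exact absurd (hle_step (n + 1)) (hdrop.trans_le hn).not_ge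

theorem cauchySeq (hu : MeirKeelerChatterjeaSeq u)
    (hlim : Tendsto (fun n => dist (u n) (u (n + 1))) atTop (𝓝 0)) : CauchySeq u := by
  refine Metric.cauchySeq_iff'.2 fun ε hε => ?_
  obtain ⟨δ, hδ, hεδ⟩ := hu (ε / 2) (half_pos hε)
  obtain ⟨N, hN⟩ := eventually_atTop.1 (hlim.eventually_lt_const hδ)
  have hbound : ∀ k, dist (u (N + 1)) (u (N + k + 1)) ≤ ε / 2 := by
    intro k
    induction k with
    | zero => rw [add_zero, dist_self]; positivity
    | succ k ih =>
      refine hεδ N (N + k + 1) ?_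
      have hfirst := hN N le_rfl
      have hlast := hN (N + k + 1) (by lia)
      have hlong := dist_triangle4 (u N) (u (N + 1)) (u (N + k + 1)) (u (N + k + 1 + 1))
      rw [dist_comm (u (N + k + 1)) (u (N + 1))]
      linarith
  refine ⟨N + 1, fun n hn => ?_⟩
  obtain ⟨k, rfl⟩ := Nat.exists_eq_add_of_le hn
  rw [dist_comm, add_right_comm]
  exact (hbound k).trans_lt (half_lt_self hε)

end MeirKeelerChatterjeaSeq

theorem dist_map_eq_zero_of_tendsto_iterate {T : X → X} {K : ℝ} (hK : K < 1)
    (hT : ∀ x y, dist (T x) (T y) ≤ K * (dist x (T y) + dist y (T x))) {x z : X}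
    (hz : Tendsto (fun n => T^[n] x) atTop (𝓝 z)) : dist z (T z) = 0 := by
  have hz_succ : Tendsto (fun n => T (T^[n] x)) atTop (𝓝 z) := by
    simpa only [iterate_succ_apply'] using (tendsto_add_atTop_iff_nat 1).2 hz
  have hle : dist z (T z) ≤ K * (dist z (T z) + dist z z) :=
    le_of_tendsto_of_tendsto' (hz_succ.dist tendsto_const_nhds)
      (((hz.dist tendsto_const_nhds).add (tendsto_const_nhds.dist hz_succ)).const_mul K)
      fun n => hT (T^[n] x) z
  rw [dist_self, add_zero] at hle
  nlinarith [dist_nonneg (x := z) (y := T z)]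

namespace StrictChatterjea

variable {T : X → X}

theorem dist_map_le (hT : StrictChatterjea T) (x y : X) :
    dist (T x) (T y) ≤ 1 / 2 * (dist x (T y) + dist y (T x)) := by
  rcases eq_or_ne x y with rfl | hxy
  · rw [dist_self]
    positivity
  · exact (hT x y hxy).le.trans_eq (by ring)

theorem dist_map_map_lt (hT : StrictChatterjea T) {x : X} (hx : x ≠ T x) :
    dist (T x) (T (T x)) < dist x (T x) := by
  have hlt := hT x (T x) hx
  rw [dist_self] at hlt
  linarith [dist_triangle x (T x) (T (T x))]

theorem isFixedPt_of_dist_eq_zero (hT : StrictChatterjea T) {x : X} (hx : dist x (T x) = 0) :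
    IsFixedPt T x := by
  by_contra hne
  exact ((hT.dist_map_map_lt (Ne.symm hne)).trans_eq hx).not_ge dist_nonneg

theorem fixedPt_unique (hT : StrictChatterjea T) {z w : X} (hz : IsFixedPt T z)
    (hw : IsFixedPt T w) : z = w := by
  by_contra hne
  have hlt := hT z w hne
  rw [hz.eq, hw.eq, dist_comm w z] at hlt
  linarith

theorem cauchySeq_iterate (hT : StrictChatterjea T) {x : X}
    (hx : MeirKeelerChatterjeaSeq fun n => T^[n] x) : CauchySeq fun n => T^[n] x := by
  refine hx.cauchySeq (hx.tendsto_dist_succ_zero fun n hn => ?_)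
  simp only [iterate_succ_apply'] at hn ⊢
  exact hT.dist_map_map_lt fun heq => hn.ne' (by rw [← heq, dist_self])

theorem exists_isFixedPt_tendsto_iterate [CompleteSpace X] (hT : StrictChatterjea T) {x : X}
    (hx : MeirKeelerChatterjeaSeq fun n => T^[n] x) :
    ∃ z, IsFixedPt T z ∧ Tendsto (fun n => T^[n] x) atTop (𝓝 z) := by
  obtain ⟨z, hz⟩ := cauchySeq_tendsto_of_complete (hT.cauchySeq_iterate hx)
  have hdist := dist_map_eq_zero_of_tendsto_iterate one_half_lt_one hT.dist_map_le hz
  exact ⟨z, hT.isFixedPt_of_dist_eq_zero hdist, hz⟩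

end StrictChatterjea

theorem chatterjea_weakest_forward_general [CompleteSpace X] [Nonempty X] {T : X → X}
    (hT : StrictChatterjea T) (h : ∀ x, MeirKeelerChatterjeaSeq fun n => T^[n] x) :
    ∃ z, IsFixedPt T z ∧ (∀ w, IsFixedPt T w → w = z) ∧
      ∀ x, Tendsto (fun n => T^[n] x) atTop (𝓝 z) := by
  obtain ⟨z, hz, -⟩ := hT.exists_isFixedPt_tendsto_iterate (h (Classical.arbitrary X))
  refine ⟨z, hz, fun w hw => hT.fixedPt_unique hw hz, fun x => ?_⟩
  obtain ⟨w, hw, hlim⟩ := hT.exists_isFixedPt_tendsto_iterate (h x)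
  rwa [hT.fixedPt_unique hw hz] at hlim

end PseudoMetricSpace

/-- Theorem 4.2, (i) ⇒ (ii): the weakest Chatterjea-type condition on Picard sequences
implies existence of a unique fixed point and convergence of all Picard sequences. -/
theorem chatterjea_weakest_forward {X : Type*} [MetricSpace X] [CompleteSpace X] [Nonempty X]
    (T : X → X)
    (hCM2 : ∀ x y : X, x ≠ y → dist (T x) (T y) < (dist x (T y) + dist y (T x)) / 2)
    (h : ∀ x : X, ∀ ε > (0 : ℝ), ∃ δ > (0 : ℝ), ∀ i j : ℕ,
      (dist (T^[i] x) (T^[j+1] x) + dist (T^[j] x) (T^[i+1] x)) / 2 < ε + δ →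
        dist (T^[i+1] x) (T^[j+1] x) ≤ ε) :
    ∃ z : X, T z = z ∧ (∀ w : X, T w = w → w = z) ∧
      ∀ x : X, Filter.Tendsto (fun n => T^[n] x) Filter.atTop (nhds z) :=
  chatterjea_weakest_forward_general hCM2 h
end

section
/- Let (X,d) be a complete metric space and T : X → X a mapping satisfying condition (CM2). If T has a unique fixed point z ∈ X and the Picard sequence (T^n x) converges to z for every x ∈ X, then for every x ∈ X and every ε > 0 there exists δ > 0 such that for all i, j ∈ ℕ ∪ {0}, (1/2)(d(T^i x, T^{j+1} x) + d(T^j x, T^{i+1} x)) < ε + δ implies d(T^{i+1} x, T^{j+1} x) ≤ ε. -/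
/-!
Since `T^[n] x → z = T z`, both the orbit `n ↦ T^[n] x` and its image under `T` extend continuously
to the compact space `OnePoint ℕ` with value `z` at `∞`, although `T` itself need not be continuous.
On the compact set of pairs where `dist (T p) (T q) ≥ ε`, the Chatterjea mean
`(dist p (T q) + dist q (T p)) / 2` exceeds `ε` pointwise, hence by a uniform `δ`.
-/

open Filter Topology

theorem exists_gt_forall_lt_imp_lt {K α β : Type*} [TopologicalSpace K] [CompactSpace K]
    [LinearOrder α] [LinearOrder β] [NoMaxOrder β] {f : K → α} {g : K → β} {a : α} {b : β}
    (hf : UpperSemicontinuous f) (hg : LowerSemicontinuous g) (hfg : ∀ p, a ≤ f p → b < g p) :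
    ∃ m > b, ∀ p, g p < m → f p < a := by
  have hcompact : IsCompact (f ⁻¹' Set.Ici a) := (hf.isClosed_preimage a).isCompact
  rcases (f ⁻¹' Set.Ici a).eq_empty_or_nonempty with hempty | hnonempty
  · obtain ⟨m, hm⟩ := exists_gt b
    exact ⟨m, hm, fun p _ => not_le.1 (Set.eq_empty_iff_forall_notMem.1 hempty p)⟩
  · obtain ⟨p₀, hp₀, hmin⟩ := (hg.lowerSemicontinuousOn _).exists_isMinOn hnonempty hcompact
    exact ⟨g p₀, hfg p₀ hp₀, fun p hp => not_le.1 fun hap => hp.not_ge (hmin hap)⟩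

theorem continuous_comp_onePoint_elim_iterate {X : Type*} [TopologicalSpace X] {T : X → X}
    {x z : X} (hz : T z = z) (hx : Tendsto (fun n => T^[n] x) atTop (𝓝 z)) :
    Continuous (T ∘ fun p : OnePoint ℕ => p.elim z fun n => T^[n] x) := by
  rw [OnePoint.continuous_iff_from_nat]
  simpa only [Function.comp_apply, OnePoint.elim_some, OnePoint.elim_infty, hz,
    ← Function.iterate_succ_apply'] using (tendsto_add_atTop_iff_nat 1).2 hx

section Chatterjea

variable {X : Type*} [PseudoMetricSpace X] {T : X → X}

theorem exists_pos_forall_chatterjea_mean_lt_imp_dist_lt {K : Type*} [TopologicalSpace K]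
    [CompactSpace K] {u : K → X} (hu : Continuous u) (hTu : Continuous (T ∘ u))
    (hT : ∀ x y : X, x ≠ y → dist (T x) (T y) < (dist x (T y) + dist y (T x)) / 2)
    {ε : ℝ} (hε : 0 < ε) :
    ∃ δ > 0, ∀ p q : K, (dist (u p) (T (u q)) + dist (u q) (T (u p))) / 2 < ε + δ →
      dist (T (u p)) (T (u q)) < ε := by
  have hdist : Continuous fun r : K × K => dist (T (u r.1)) (T (u r.2)) :=
    (hTu.comp continuous_fst).dist (hTu.comp continuous_snd)
  have hmean : Continuous fun r : K × K =>
      (dist (u r.1) (T (u r.2)) + dist (u r.2) (T (u r.1))) / 2 :=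
    (((hu.comp continuous_fst).dist (hTu.comp continuous_snd)).add
      ((hu.comp continuous_snd).dist (hTu.comp continuous_fst))).div_const 2
  have hlt (r : K × K) (hr : ε ≤ dist (T (u r.1)) (T (u r.2))) :
      ε < (dist (u r.1) (T (u r.2)) + dist (u r.2) (T (u r.1))) / 2 := by
    have hne : u r.1 ≠ u r.2 := fun heq => by
      rw [heq, dist_self] at hr
      exact hr.not_gt hε
    exact hr.trans_lt (hT _ _ hne)
  obtain ⟨m, hm, h⟩ :=
    exists_gt_forall_lt_imp_lt hdist.upperSemicontinuous hmean.lowerSemicontinuous hlt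
  exact ⟨m - ε, sub_pos.2 hm, fun p q hpq => h (p, q) (by rwa [add_sub_cancel] at hpq)⟩

theorem chatterjea_weakest_backward_general
    (hT : ∀ x y : X, x ≠ y → dist (T x) (T y) < (dist x (T y) + dist y (T x)) / 2)
    {x z : X} (hz : T z = z) (hx : Tendsto (fun n => T^[n] x) atTop (𝓝 z))
    {ε : ℝ} (hε : 0 < ε) :
    ∃ δ > 0, ∀ i j : ℕ,
      (dist (T^[i] x) (T^[j + 1] x) + dist (T^[j] x) (T^[i + 1] x)) / 2 < ε + δ →
        dist (T^[i + 1] x) (T^[j + 1] x) < ε := by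
  have horbit : Continuous fun p : OnePoint ℕ => p.elim z fun n => T^[n] x :=
    (OnePoint.continuous_iff_from_nat _).2 hx
  obtain ⟨δ, hδ, h⟩ := exists_pos_forall_chatterjea_mean_lt_imp_dist_lt horbit
    (continuous_comp_onePoint_elim_iterate hz hx) hT hε
  refine ⟨δ, hδ, fun i j => ?_⟩
  simpa only [OnePoint.elim_some, ← Function.iterate_succ_apply'] using h i j

end Chatterjea

/-- Theorem 4.2, (ii) ⇒ (i): if a (CM2) mapping has a unique fixed point to which all
Picard sequences converge, then the weakest Chatterjea-type ε-δ condition holds. -/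
theorem chatterjea_weakest_backward {X : Type*} [MetricSpace X] [CompleteSpace X] [Nonempty X]
    (T : X → X)
    (hCM2 : ∀ x y : X, x ≠ y → dist (T x) (T y) < (dist x (T y) + dist y (T x)) / 2)
    (z : X) (hz : T z = z) (huniq : ∀ w : X, T w = w → w = z)
    (hconv : ∀ x : X, Filter.Tendsto (fun n => T^[n] x) Filter.atTop (nhds z)) :
    ∀ x : X, ∀ ε > (0 : ℝ), ∃ δ > (0 : ℝ), ∀ i j : ℕ,
      (dist (T^[i] x) (T^[j+1] x) + dist (T^[j] x) (T^[i+1] x)) / 2 < ε + δ →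
        dist (T^[i+1] x) (T^[j+1] x) ≤ ε := by
  intro x ε hε
  obtain ⟨δ, hδ, h⟩ := chatterjea_weakest_backward_general hCM2 hz (hconv x) hε
  exact ⟨δ, hδ, fun i j hij => (h i j hij).le⟩
end

section
/- Let (X,d) be a metric space and T : X → X a mapping satisfying condition (CM2). Fix x₀ ∈ X and set x_n = T^n x₀. If x_n ≠ x_{n+1} for all n, then the sequence (d(x_n, x_{n+1}))_{n∈ℕ} is strictly decreasing. -/
theorem dist_lt_dist_of_dist_lt_half_dist {X : Type*} [PseudoMetricSpace X] {x y z : X}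
    (h : dist y z < dist x z / 2) : dist y z < dist x y := by
  linarith [dist_triangle x y z]

theorem chatterjea_cm2_strict_anti_general {X : Type*} [PseudoMetricSpace X] (T : X → X)
    (hT : ∀ x : X, x ≠ T x → dist (T x) (T (T x)) < dist x (T (T x)) / 2)
    (x₀ : X) (hne : ∀ n : ℕ, T^[n] x₀ ≠ T^[n + 1] x₀) :
    StrictAnti (fun n : ℕ => dist (T^[n] x₀) (T^[n + 1] x₀)) := by
  simp only [Function.iterate_succ_apply'] at hne ⊢
  refine strictAnti_nat_of_succ_lt fun n => ?_
  rw [Function.iterate_succ_apply']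
  exact dist_lt_dist_of_dist_lt_half_dist (hT _ (hne n))

/-- Under (CM2), if the Picard sequence never stabilizes, the successive distances
form a strictly decreasing sequence. -/
theorem chatterjea_cm2_strict_anti {X : Type*} [MetricSpace X]
    (T : X → X)
    (hCM2 : ∀ x y : X, x ≠ y → dist (T x) (T y) < (dist x (T y) + dist y (T x)) / 2)
    (x₀ : X) (hne : ∀ n : ℕ, T^[n] x₀ ≠ T^[n+1] x₀) :
    StrictAnti (fun n : ℕ => dist (T^[n] x₀) (T^[n+1] x₀)) :=
  chatterjea_cm2_strict_anti_general T
    (fun x hx => by simpa only [dist_self, add_zero] using hCM2 x (T x) hx) x₀ hne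
end

section
/- Let (X,d) be a metric space, T : X → X a mapping, x₀ ∈ X, and x_n = T^n x₀. Suppose lim_{n→∞} d(x_n, x_{n+1}) = 0 and that for every ε > 0 there exists δ > 0 such that for all i, j ∈ ℕ ∪ {0}, (1/2)(d(x_i, x_{j+1}) + d(x_j, x_{i+1})) < ε + δ implies d(x_{i+1}, x_{j+1}) ≤ ε. Then (x_n)_{n∈ℕ} is a Cauchy sequence. -/
/-!
Fix `ε > 0`, take the matching `δ`, and choose `N` such that all displacements from index `N` on
are below `δ`. If `u n` lies within `ε` of `u (N + 1)`, then the triangle inequality costs at most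
two displacements in `dist (u N) (u (n + 1))` and none in `dist (u n) (u (N + 1))`, so their average
is below `ε + δ`. Hence `u (n + 1)` again lies within `ε` of `u (N + 1)`: the closed `ε`-ball around
`u (N + 1)` traps the tail of the sequence.
-/

section PseudoMetric

variable {X : Type*} [PseudoMetricSpace X]

theorem half_dist_add_dist_le (a b c d : X) :
    (dist a d + dist c b) / 2 ≤ dist b c + (dist a b + dist c d) / 2 := by
  linarith [dist_triangle4 a b c d, dist_comm b c]

theorem dist_le_of_chatterjea_step {u : ℕ → X} {ε δ : ℝ} {N : ℕ} (hε : 0 ≤ ε)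
    (hdisp : ∀ n ≥ N, dist (u n) (u (n + 1)) < δ)
    (hstep : ∀ n > N, (dist (u N) (u (n + 1)) + dist (u n) (u (N + 1))) / 2 < ε + δ →
      dist (u (N + 1)) (u (n + 1)) ≤ ε)
    {n : ℕ} (hn : N + 1 ≤ n) : dist (u (N + 1)) (u n) ≤ ε := by
  induction n, hn using Nat.le_induction with
  | base => rwa [dist_self]
  | succ n hn ih =>
    refine hstep n hn ?_
    calc (dist (u N) (u (n + 1)) + dist (u n) (u (N + 1))) / 2
        ≤ dist (u (N + 1)) (u n) + (dist (u N) (u (N + 1)) + dist (u n) (u (n + 1))) / 2 :=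
          half_dist_add_dist_le _ _ _ _
      _ < ε + δ := by linarith [hdisp N le_rfl, hdisp n (Nat.le_of_succ_le hn)]

theorem chatterjea_cauchy_general {u : ℕ → X}
    (hlim : Filter.Tendsto (fun n : ℕ => dist (u n) (u (n + 1))) Filter.atTop (nhds 0))
    (h : ∀ ε > (0 : ℝ), ∃ δ > (0 : ℝ), ∀ i j : ℕ,
      (dist (u i) (u (j + 1)) + dist (u j) (u (i + 1))) / 2 < ε + δ →
        dist (u (i + 1)) (u (j + 1)) ≤ ε) :
    CauchySeq u := by
  refine Metric.cauchySeq_iff'.2 fun ε hε => ?_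
  obtain ⟨δ, hδ, hstep⟩ := h (ε / 2) (half_pos hε)
  obtain ⟨N, hdisp⟩ := Filter.eventually_atTop.1 (hlim.eventually_lt_const hδ)
  refine ⟨N + 1, fun n hn => ?_⟩
  calc dist (u n) (u (N + 1)) = dist (u (N + 1)) (u n) := dist_comm _ _
    _ ≤ ε / 2 := dist_le_of_chatterjea_step (half_pos hε).le hdisp (fun j _ => hstep N j) hn
    _ < ε := half_lt_self hε

end PseudoMetric

/-- If the displacements of a Picard sequence tend to 0 and the weakest Chatterjea-type
ε-δ condition holds along the sequence, then the Picard sequence is Cauchy. -/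
theorem chatterjea_cauchy {X : Type*} [MetricSpace X]
    (T : X → X) (x₀ : X)
    (hlim : Filter.Tendsto (fun n : ℕ => dist (T^[n] x₀) (T^[n+1] x₀))
      Filter.atTop (nhds 0))
    (h : ∀ ε > (0 : ℝ), ∃ δ > (0 : ℝ), ∀ i j : ℕ,
      (dist (T^[i] x₀) (T^[j+1] x₀) + dist (T^[j] x₀) (T^[i+1] x₀)) / 2 < ε + δ →
        dist (T^[i+1] x₀) (T^[j+1] x₀) ≤ ε) :
    CauchySeq (fun n : ℕ => T^[n] x₀) :=
  chatterjea_cauchy_general hlim h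
end

section
/- Let (a_n)_{n∈ℕ} be a strictly decreasing sequence of nonnegative reals with limit α ≥ 0, and let k ≥ 0 be a fixed integer. Then α = 0 if and only if for every ε > 0 there exists δ > 0 such that for all n ∈ ℕ, a_n < ε + δ implies a_{n+k} ≤ ε. -/
/-!
The shift condition at a single `ε` fails exactly when `ε = α`. At `ε = α` it would force a term of
the sequence to be at most `α`, but all terms lie strictly above their limit. At `ε ≠ α` the terms
do not accumulate at `ε`, so for small `δ` no term lies in `(ε, ε + δ)`: hence `a n < ε + δ` already
gives `a n ≤ ε`. The condition for all `ε > 0` therefore says that `α` is not positive.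
-/

open Filter Set Topology

theorem exists_gt_forall_lt_imp_le_of_tendsto_cofinite {ι X : Type*} [LinearOrder X]
    [TopologicalSpace X] [OrderTopology X] [NoMaxOrder X] {a : ι → X} {x y : X}
    (ha : Tendsto a cofinite (𝓝 x)) (hxy : x ≠ y) :
    ∃ u > y, ∀ i, a i < u → a i ≤ y := by
  let termsAbove : {i // y < a i} → X := fun i ↦ a i
  have closed_termsAbove : IsClosed (insert x (range termsAbove)) :=
    (ha.comp Subtype.val_injective.tendsto_cofinite).isCompact_insert_range_of_cofinite.isClosed
  have notMem_termsAbove : y ∉ insert x (range termsAbove) := by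
    rintro (hyx | ⟨⟨i, hi⟩, hiy⟩)
    · exact hxy hyx.symm
    · exact hi.ne' hiy
  obtain ⟨u, hyu, hu⟩ := exists_Ico_subset_of_mem_nhds
    (closed_termsAbove.isOpen_compl.mem_nhds notMem_termsAbove) (exists_gt y)
  refine ⟨u, hyu, fun i hiu ↦ not_lt.1 fun hyi ↦ ?_⟩
  exact hu ⟨hyi.le, hiu⟩ (mem_insert_of_mem x ⟨⟨i, hyi⟩, rfl⟩)

theorem lt_of_strictAnti_of_tendsto {ι X : Type*} [PartialOrder ι] [IsDirectedOrder ι]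
    [NoMaxOrder ι] [Preorder X] [TopologicalSpace X] [OrderClosedTopology X] {a : ι → X} {x : X}
    (ha : StrictAnti a) (hlim : Tendsto a atTop (𝓝 x)) (i : ι) : x < a i := by
  obtain ⟨j, hij⟩ := exists_gt i
  exact (ha.antitone.le_of_tendsto hlim j).trans_lt (ha hij)

section OrderedGroup

variable {ι G : Type*} [Infinite ι] [AddCommGroup G] [LinearOrder G] [IsOrderedAddMonoid G]
  [TopologicalSpace G] [OrderTopology G] {a : ι → G} {σ : ι → ι} {α : G}

theorem exists_pos_forall_lt_add_imp_le_iff_ne (hσ : ∀ i, a (σ i) ≤ a i) (hlt : ∀ i, α < a i)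
    (hlim : Tendsto a cofinite (𝓝 α)) (ε : G) :
    (∃ δ > 0, ∀ i, a i < ε + δ → a (σ i) ≤ ε) ↔ α ≠ ε := by
  constructor
  · rintro ⟨δ, hδ, hshift⟩ rfl
    obtain ⟨i, hi⟩ := (hlim.eventually_lt_const (lt_add_of_pos_right α hδ)).exists
    exact (hlt (σ i)).not_ge (hshift i hi)
  · intro hne
    have : Nontrivial G := ⟨α, a (Classical.arbitrary ι), (hlt _).ne⟩
    obtain ⟨u, hεu, hu⟩ := exists_gt_forall_lt_imp_le_of_tendsto_cofinite hlim hne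
    refine ⟨u - ε, sub_pos.2 hεu, fun i hi ↦ (hσ i).trans (hu i ?_)⟩
    rwa [add_sub_cancel] at hi

theorem seq_zero_iff_shift_condition_general (hσ : ∀ i, a (σ i) ≤ a i) (hlt : ∀ i, α < a i)
    (hlim : Tendsto a cofinite (𝓝 α)) :
    α ≤ 0 ↔ ∀ ε > 0, ∃ δ > 0, ∀ i, a i < ε + δ → a (σ i) ≤ ε := by
  simp only [exists_pos_forall_lt_add_imp_le_iff_ne hσ hlt hlim]
  exact ⟨fun hα ε hε ↦ (hα.trans_lt hε).ne, fun hne ↦ not_lt.1 fun hα ↦ hne α hα rfl⟩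

end OrderedGroup

/-- Lemma 5.1, (i) ⇔ (ii): for a strictly decreasing nonnegative sequence with limit α,
α = 0 iff the ε-δ condition with shift k holds. -/
theorem seq_zero_iff_shift_condition (a : ℕ → ℝ) (α : ℝ) (k : ℕ)
    (ha : StrictAnti a) (hnonneg : ∀ n, 0 ≤ a n)
    (hlim : Filter.Tendsto a Filter.atTop (nhds α)) :
    α = 0 ↔ ∀ ε > (0 : ℝ), ∃ δ > (0 : ℝ), ∀ n : ℕ, a n < ε + δ → a (n + k) ≤ ε := by
  exact (ge_of_tendsto' hlim hnonneg).ge_iff_eq'.symm.trans <|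
    seq_zero_iff_shift_condition_general (σ := (· + k)) (fun n ↦ ha.antitone (n.le_add_right k))
      (lt_of_strictAnti_of_tendsto ha hlim) (Nat.cofinite_eq_atTop ▸ hlim)
end

section
/- Let (X,d) be a complete metric space and T : X → X a mapping satisfying condition (CM). Then the following are equivalent: (i) lim_{n→∞} d(T^n x, T^{n+1} x) = 0 for every x ∈ X; (ii) T has a unique fixed point z ∈ X and the Picard sequence (T^n x) converges to z for every x ∈ X. -/
/-!
Along an orbit, the Kannan inequality bounds the distance between two successors `T^[m+1] x` and
`T^[n+1] x` by the displacements at times `m` and `n`. Vanishing displacements therefore force the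
orbit to be Cauchy. If `z` is its limit, letting `n → ∞` in the inequality for `T^[n] x` and `z`
gives `dist z (T z) ≤ K * dist z (T z)`, so `z` is fixed because `K < 1`.
-/

open Filter Function Topology

/-- Kannan's contractive condition with constant `K`: the distance between two images is controlled
by the displacements of the two points rather than by their distance. The inequality is not strict,
so that it is also meaningful for equal points and passes to limits. -/
def KannanWith {X : Type*} [PseudoMetricSpace X] (K : ℝ) (T : X → X) : Prop :=
  ∀ x y, dist (T x) (T y) ≤ K * (dist x (T x) + dist y (T y))

theorem tendsto_dist_succ_of_tendsto {X : Type*} [PseudoMetricSpace X] {u : ℕ → X} {z : X}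
    (hu : Tendsto u atTop (𝓝 z)) : Tendsto (fun n ↦ dist (u n) (u (n + 1))) atTop (𝓝 0) := by
  simpa only [dist_self] using hu.dist ((tendsto_add_atTop_iff_nat 1).2 hu)

namespace KannanWith

section PseudoMetricSpace

variable {X : Type*} [PseudoMetricSpace X] {K : ℝ} {T : X → X} {x z : X}

theorem of_dist_lt (hK : 0 ≤ K)
    (hT : ∀ x y, x ≠ y → dist (T x) (T y) < K * (dist x (T x) + dist y (T y))) :
    KannanWith K T := by
  intro x y
  rcases eq_or_ne x y with rfl | hxy
  · rw [dist_self]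
    positivity
  · exact (hT x y hxy).le

theorem dist_iterate_succ_le (hT : KannanWith K T) (x y : X) (m n : ℕ) :
    dist (T^[m + 1] x) (T^[n + 1] y) ≤
      K * (dist (T^[m] x) (T^[m + 1] x) + dist (T^[n] y) (T^[n + 1] y)) := by
  simpa only [iterate_succ_apply'] using hT (T^[m] x) (T^[n] y)

theorem dist_iterate_succ_le_of_isFixedPt (hT : KannanWith K T) (hz : IsFixedPt T z)
    (x : X) (n : ℕ) :
    dist (T^[n + 1] x) z ≤ K * dist (T^[n] x) (T^[n + 1] x) := by
  simpa only [(hz.iterate _).eq, dist_self, add_zero] using hT.dist_iterate_succ_le x z n 0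

theorem cauchySeq_iterate (hT : KannanWith K T)
    (hx : Tendsto (fun n ↦ dist (T^[n] x) (T^[n + 1] x)) atTop (𝓝 0)) :
    CauchySeq (fun n ↦ T^[n] x) := by
  have bound_tendsto : Tendsto (fun p : ℕ × ℕ ↦
      K * (dist (T^[p.1] x) (T^[p.1 + 1] x) + dist (T^[p.2] x) (T^[p.2 + 1] x)))
      atTop (𝓝 0) := by
    rw [← prod_atTop_atTop_eq]
    simpa only [comp_apply, add_zero, mul_zero] using
      ((hx.comp tendsto_fst).add (hx.comp tendsto_snd)).const_mul K
  rw [← cauchySeq_shift 1, cauchySeq_iff_tendsto_dist_atTop_0]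
  exact squeeze_zero (fun _ ↦ dist_nonneg)
    (fun p ↦ hT.dist_iterate_succ_le x x p.1 p.2) bound_tendsto

theorem tendsto_iterate_of_isFixedPt (hT : KannanWith K T) (hz : IsFixedPt T z)
    (hx : Tendsto (fun n ↦ dist (T^[n] x) (T^[n + 1] x)) atTop (𝓝 0)) :
    Tendsto (fun n ↦ T^[n] x) atTop (𝓝 z) := by
  rw [← tendsto_add_atTop_iff_nat 1, tendsto_iff_dist_tendsto_zero]
  exact squeeze_zero (fun _ ↦ dist_nonneg) (hT.dist_iterate_succ_le_of_isFixedPt hz x)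
    (by simpa only [mul_zero] using hx.const_mul K)

end PseudoMetricSpace

section MetricSpace

variable {X : Type*} [MetricSpace X] {K : ℝ} {T : X → X} {x w z : X}

theorem eq_of_isFixedPt (hT : KannanWith K T) (hw : IsFixedPt T w) (hz : IsFixedPt T z) :
    w = z := by
  have dist_le_zero_of_fixed : dist w z ≤ 0 := by
    simpa only [hw.eq, hz.eq, dist_self, add_zero, mul_zero] using hT w z
  exact dist_le_zero.1 dist_le_zero_of_fixed

theorem isFixedPt_of_tendsto_iterate (hT : KannanWith K T) (hK : K < 1)
    (hz : Tendsto (fun n ↦ T^[n] x) atTop (𝓝 z)) : IsFixedPt T z := by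
  have displacement_le : dist z (T z) ≤ K * (0 + dist z (T z)) :=
    le_of_tendsto_of_tendsto'
      (((tendsto_add_atTop_iff_nat 1).2 hz).dist tendsto_const_nhds)
      (((tendsto_dist_succ_of_tendsto hz).add_const _).const_mul K)
      (fun n ↦ hT.dist_iterate_succ_le x z n 0)
  have displacement_nonpos : dist z (T z) ≤ 0 := by
    nlinarith
  exact (dist_le_zero.1 displacement_nonpos).symm

end MetricSpace

end KannanWith

theorem kannan_displacement_zero_iff_fixed_point_general {X : Type*} [MetricSpace X]
    [CompleteSpace X] [Nonempty X] {K : ℝ} (hK : K < 1) {T : X → X} (hT : KannanWith K T) :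
    (∀ x, Tendsto (fun n ↦ dist (T^[n] x) (T^[n + 1] x)) atTop (𝓝 0)) ↔
      ∃ z, T z = z ∧ (∀ w, T w = w → w = z) ∧
        ∀ x, Tendsto (fun n ↦ T^[n] x) atTop (𝓝 z) := by
  constructor
  · intro hdisp
    obtain ⟨x₀⟩ := ‹Nonempty X›
    obtain ⟨z, hz⟩ := cauchySeq_tendsto_of_complete (hT.cauchySeq_iterate (hdisp x₀))
    have hfix : IsFixedPt T z := hT.isFixedPt_of_tendsto_iterate hK hz
    exact ⟨z, hfix, fun w hw ↦ hT.eq_of_isFixedPt hw hfix,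
      fun x ↦ hT.tendsto_iterate_of_isFixedPt hfix (hdisp x)⟩
  · rintro ⟨z, -, -, hz⟩ x
    exact tendsto_dist_succ_of_tendsto (hz x)

/-- Theorem 5.2: under (CM) on a complete metric space, all Picard displacement
sequences tend to 0 iff T has a unique fixed point to which all Picard sequences
converge. -/
theorem kannan_displacement_zero_iff_fixed_point {X : Type*} [MetricSpace X]
    [CompleteSpace X] [Nonempty X]
    (T : X → X)
    (hCM : ∀ x y : X, x ≠ y → dist (T x) (T y) < (dist x (T x) + dist y (T y)) / 2) :
    (∀ x : X, Filter.Tendsto (fun n : ℕ => dist (T^[n] x) (T^[n+1] x))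
        Filter.atTop (nhds 0)) ↔
      ∃ z : X, T z = z ∧ (∀ w : X, T w = w → w = z) ∧
        ∀ x : X, Filter.Tendsto (fun n => T^[n] x) Filter.atTop (nhds z) := by
  exact kannan_displacement_zero_iff_fixed_point_general one_half_lt_one <|
    .of_dist_lt one_half_pos.le fun x y hxy ↦ (hCM x y hxy).trans_eq (by ring)
end
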